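/- Let p, q ∈ ℝ^{2n} be configurations each consisting of n pairwise distinct points in ℝ². Then g_ij(q)ᵀ g_ik(q) = g_ij(p)ᵀ g_ik(p) for all triples of distinct indices i,j,k (i.e., f_K(q) = f_K(p)) if and only if there exists an orthogonal matrix R ∈ O(2) such that g_ij(q) = R·g_ij(p) for all pairs of distinct indices i,j (i.e., the bearing vectors of q agree with those of p up to a single common rotation or reflection). -/

import Mathlib

/-!
Fix a vertex `a`. Equality of the angles at `a` says that the bearings between `a` and the other
vertices have the same Gram matrix in both configurations, so an isometry `R` carries one family to
the other. The same `R` works for every other pair `l, m`, even when `a, l, m` are collinear: the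
bearing between `l` and `m` lies in the span of the bearings between `a` and each of them, so it is
determined by its inner products with these two, which up to sign are the cosines of the angles at
`l` and `m`.
-/

open Matrix Real

noncomputable section

/-- Points in the plane. -/
abbrev Vec2 := Fin 2 → ℝ

/-- Euclidean norm of a planar vector. -/
noncomputable def nrm (x : Vec2) : ℝ := Real.sqrt (x ⬝ᵥ x)

/-- The bearing `g(x,y) = (x - y)/‖x - y‖`. -/
noncomputable def brg (x y : Vec2) : Vec2 := (nrm (x - y))⁻¹ • (x - y)

open Submodule WithLp
open scoped InnerProductSpace

section Gram

variable {𝕜 E : Type*} [RCLike 𝕜] [NormedAddCommGroup E] [InnerProductSpace 𝕜 E]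

theorem eq_of_mem_span_of_inner_eq {s : Set E} {x y : E} (hx : x ∈ span 𝕜 s) (hy : y ∈ span 𝕜 s)
    (h : ∀ w ∈ s, ⟪w, x⟫_𝕜 = ⟪w, y⟫_𝕜) : x = y := by
  have hle : span 𝕜 s ≤ (𝕜 ∙ (x - y))ᗮ := span_le.2 fun w hw ↦
    mem_orthogonal_singleton_iff_inner_left.2 (by rw [inner_sub_right, h w hw, sub_self])
  have hself : ⟪x - y, x - y⟫_𝕜 = 0 :=
    mem_orthogonal_singleton_iff_inner_left.1 (hle (sub_mem hx hy))
  exact sub_eq_zero.1 (inner_self_eq_zero.1 hself)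

theorem norm_linearCombination_eq_of_inner_eq {F ι : Type*} [NormedAddCommGroup F]
    [InnerProductSpace 𝕜 F] {u : ι → E} {v : ι → F}
    (h : ∀ i j, ⟪v i, v j⟫_𝕜 = ⟪u i, u j⟫_𝕜) (c : ι →₀ 𝕜) :
    ‖Finsupp.linearCombination 𝕜 v c‖ = ‖Finsupp.linearCombination 𝕜 u c‖ := by
  simp only [norm_eq_sqrt_re_inner (𝕜 := 𝕜), Finsupp.linearCombination_apply, Finsupp.sum_inner,
    Finsupp.inner_sum, inner_smul_left, inner_smul_right, h]

variable [FiniteDimensional 𝕜 E]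

theorem exists_linearIsometryEquiv_apply_eq_of_norm_eq {M : Type*} [AddCommGroup M] [Module 𝕜 M]
    {f g : M →ₗ[𝕜] E} (h : ∀ x, ‖g x‖ = ‖f x‖) : ∃ R : E ≃ₗᵢ[𝕜] E, ∀ x, g x = R (f x) := by
  obtain ⟨s, hs⟩ := f.rangeRestrict.exists_rightInverse_of_surjective f.range_rangeRestrict
  have hfs (y : f.range) : f (s y) = y := congrArg Subtype.val (LinearMap.congr_fun hs y)
  let L : f.range →ₗᵢ[𝕜] E := ⟨g ∘ₗ s, fun y ↦ by simp [h, hfs]⟩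
  refine ⟨L.extend.toLinearIsometryEquiv rfl, fun x ↦ ?_⟩
  have hker : g (x - s (f.rangeRestrict x)) = 0 := by
    rw [← norm_eq_zero, h, map_sub, hfs, LinearMap.codRestrict_apply, sub_self, norm_zero]
  calc g x = L (f.rangeRestrict x) := sub_eq_zero.1 (by rwa [map_sub] at hker)
    _ = L.extend (f x) := (L.extend_apply (f.rangeRestrict x)).symm

theorem exists_linearIsometryEquiv_apply_eq_of_inner_eq {ι : Type*} {u v : ι → E}
    (h : ∀ i j, ⟪v i, v j⟫_𝕜 = ⟪u i, u j⟫_𝕜) : ∃ R : E ≃ₗᵢ[𝕜] E, ∀ i, v i = R (u i) := by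
  obtain ⟨R, hR⟩ := exists_linearIsometryEquiv_apply_eq_of_norm_eq
    (norm_linearCombination_eq_of_inner_eq h)
  exact ⟨R, fun i ↦ by simpa using hR (Finsupp.single i 1)⟩

end Gram

section Bearing

variable {V W P Q : Type*}
  [NormedAddCommGroup V] [InnerProductSpace ℝ V] [MetricSpace P] [NormedAddTorsor V P]
  [NormedAddCommGroup W] [InnerProductSpace ℝ W] [MetricSpace Q] [NormedAddTorsor W Q]

/-- The bearing `(x - y) / ‖x - y‖` of two points of a Euclidean affine space, with the orientation
of `brg`; it is zero when the points coincide. -/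
def bearing (x y : P) : V := NormedSpace.normalize (x -ᵥ y)

theorem bearing_self (x : P) : bearing x x = (0 : V) := by
  simp [bearing]

theorem neg_bearing (x y : P) : -bearing x y = (bearing y x : V) := by
  rw [bearing, bearing, ← NormedSpace.normalize_neg, neg_vsub_eq_vsub_rev]

theorem norm_bearing {x y : P} (h : x ≠ y) : ‖(bearing x y : V)‖ = 1 :=
  NormedSpace.norm_normalize (vsub_ne_zero.2 h)

theorem norm_smul_bearing (x y : P) : ‖x -ᵥ y‖ • bearing x y = x -ᵥ y :=
  NormedSpace.norm_smul_normalize _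

theorem bearing_mem_span_pair (x y z : P) :
    bearing y z ∈ span ℝ {bearing x y, (bearing x z : V)} := by
  have hvsub : y -ᵥ z = ‖x -ᵥ z‖ • bearing x z - ‖x -ᵥ y‖ • bearing x y := by
    rw [norm_smul_bearing, norm_smul_bearing, vsub_sub_vsub_cancel_left]
  change ‖y -ᵥ z‖⁻¹ • (y -ᵥ z) ∈ _
  rw [hvsub]
  exact smul_mem _ _ (sub_mem (smul_mem _ _ (mem_span_of_mem (by simp)))
    (smul_mem _ _ (mem_span_of_mem (by simp))))

theorem bearing_eq_map_of_inner_eq (R : V →ₗᵢ[ℝ] W) {x y z : P} {x' y' z' : Q}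
    (hxy : bearing x' y' = R (bearing x y)) (hxz : bearing x' z' = R (bearing x z))
    (hy : ⟪bearing y' x', bearing y' z'⟫_ℝ = ⟪bearing y x, bearing y z⟫_ℝ)
    (hz : ⟪bearing z' x', bearing z' y'⟫_ℝ = ⟪bearing z x, bearing z y⟫_ℝ) :
    bearing y' z' = R (bearing y z) := by
  have hspan : R (bearing y z) ∈ span ℝ {bearing x' y', bearing x' z'} := by
    rw [hxy, hxz, ← Set.image_pair]
    exact map_span R.toLinearMap _ ▸ mem_map_of_mem (bearing_mem_span_pair x y z)
  refine eq_of_mem_span_of_inner_eq (bearing_mem_span_pair x' y' z') hspan ?_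
  rintro _ (rfl | rfl)
  · rw [hxy, R.inner_map_map, ← hxy]
    simpa only [← neg_bearing y' x', ← neg_bearing y x, inner_neg_left, neg_inj] using hy
  · rw [hxz, R.inner_map_map, ← hxz]
    simpa only [← neg_bearing z', ← neg_bearing z, inner_neg_neg] using hz

theorem exists_linearIsometryEquiv_bearing_eq [FiniteDimensional ℝ V] {ι : Type*} {p q : ι → P}
    (h : ∀ i j k, ⟪bearing (q i) (q j), bearing (q i) (q k)⟫_ℝ =
      ⟪bearing (p i) (p j), bearing (p i) (p k)⟫_ℝ) :
    ∃ R : V ≃ₗᵢ[ℝ] V, ∀ i j, bearing (q i) (q j) = R (bearing (p i) (p j)) := by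
  rcases isEmpty_or_nonempty ι with _ | ⟨⟨a⟩⟩
  · exact ⟨.refl ℝ V, isEmptyElim⟩
  obtain ⟨R, hR⟩ := exists_linearIsometryEquiv_apply_eq_of_inner_eq (h a)
  exact ⟨R, fun l m ↦ bearing_eq_map_of_inner_eq R.toLinearIsometry (hR l) (hR m) (h l a m)
    (h m a l)⟩

theorem inner_bearing_eq_of_ne {ι : Type*} {p : ι → P} {q : ι → Q} (hp : p.Injective)
    (hq : q.Injective)
    (h : ∀ i j k, i ≠ j → i ≠ k → j ≠ k → ⟪bearing (q i) (q j), bearing (q i) (q k)⟫_ℝ =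
      ⟪bearing (p i) (p j), bearing (p i) (p k)⟫_ℝ) (i j k : ι) :
    ⟪bearing (q i) (q j), bearing (q i) (q k)⟫_ℝ =
      ⟪bearing (p i) (p j), bearing (p i) (p k)⟫_ℝ := by
  rcases eq_or_ne i j with rfl | hij
  · simp only [bearing_self, inner_zero_left]
  rcases eq_or_ne i k with rfl | hik
  · simp only [bearing_self, inner_zero_right]
  rcases eq_or_ne j k with rfl | hjk
  · simp only [real_inner_self_eq_norm_sq, norm_bearing (hp.ne hij), norm_bearing (hq.ne hij)]
  exact h i j k hij hik hjk

theorem angle_congruent_iff_bearing_congruent_general [FiniteDimensional ℝ V] {ι : Type*}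
    {p q : ι → P} (hp : p.Injective) (hq : q.Injective) :
    (∀ i j k, i ≠ j → i ≠ k → j ≠ k →
      ⟪bearing (q i) (q j), bearing (q i) (q k)⟫_ℝ =
        ⟪bearing (p i) (p j), bearing (p i) (p k)⟫_ℝ) ↔
    ∃ R : V ≃ₗᵢ[ℝ] V, ∀ i j, i ≠ j → bearing (q i) (q j) = R (bearing (p i) (p j)) := by
  constructor
  · intro h
    obtain ⟨R, hR⟩ := exists_linearIsometryEquiv_bearing_eq (inner_bearing_eq_of_ne hp hq h)
    exact ⟨R, fun i j _ ↦ hR i j⟩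
  · rintro ⟨R, hR⟩ i j k hij hik -
    rw [hR i j hij, hR i k hik, R.inner_map_map]

end Bearing

section Coordinates

/-- The action of the orthogonal group `O(n)` on Euclidean space, identifying orthogonal matrices
with linear isometries. -/
def orthogonalGroupEquivLinearIsometryEquiv (n : Type*) [Fintype n] [DecidableEq n] :
    orthogonalGroup n ℝ ≃* (EuclideanSpace ℝ n ≃ₗᵢ[ℝ] EuclideanSpace ℝ n) :=
  (Unitary.mapEquiv (.ofClass (toEuclideanCLM (n := n) (𝕜 := ℝ)))).toMulEquiv.trans
    Unitary.linearIsometryEquiv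

theorem orthogonalGroupEquivLinearIsometryEquiv_toLp {n : Type*} [Fintype n] [DecidableEq n]
    (R : orthogonalGroup n ℝ) (x : n → ℝ) :
    orthogonalGroupEquivLinearIsometryEquiv n R (toLp 2 x) = toLp 2 (R.1 *ᵥ x) :=
  rfl

theorem real_inner_toLp_toLp {n : Type*} [Fintype n] (x y : n → ℝ) :
    ⟪toLp 2 x, toLp 2 y⟫_ℝ = x ⬝ᵥ y := by
  rw [EuclideanSpace.inner_toLp_toLp, star_trivial, dotProduct_comm]

theorem norm_toLp_eq_nrm (x : Vec2) : ‖toLp 2 x‖ = nrm x := by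
  rw [norm_eq_sqrt_real_inner, real_inner_toLp_toLp, nrm]

theorem bearing_toLp (x y : Vec2) : bearing (toLp 2 x) (toLp 2 y) = toLp 2 (brg x y) := by
  rw [bearing, NormedSpace.normalize, vsub_eq_sub, ← toLp_sub, norm_toLp_eq_nrm, ← toLp_smul, brg]

end Coordinates

/-- two configurations of pairwise distinct points in the plane have all
angle cosines equal (over the complete graph) if and only if all their bearing vectors
agree up to a single common orthogonal transformation of the plane. -/
theorem angle_congruent_iff_bearing_congruent
    {n : ℕ} (p q : Fin n → Vec2)
    (hp : ∀ i j : Fin n, i ≠ j → p i ≠ p j)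
    (hq : ∀ i j : Fin n, i ≠ j → q i ≠ q j) :
    (∀ i j k : Fin n, i ≠ j → i ≠ k → j ≠ k →
        brg (q i) (q j) ⬝ᵥ brg (q i) (q k) = brg (p i) (p j) ⬝ᵥ brg (p i) (p k)) ↔
    (∃ R ∈ Matrix.orthogonalGroup (Fin 2) ℝ,
        ∀ i j : Fin n, i ≠ j → brg (q i) (q j) = R.mulVec (brg (p i) (p j))) := by
  have hgeneral := angle_congruent_iff_bearing_congruent_general (p := toLp 2 ∘ p) (q := toLp 2 ∘ q)
    ((toLp_injective 2).comp fun i j ↦ not_imp_not.1 (hp i j))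
    ((toLp_injective 2).comp fun i j ↦ not_imp_not.1 (hq i j))
  simpa only [Function.comp_apply, bearing_toLp, real_inner_toLp_toLp,
    (orthogonalGroupEquivLinearIsometryEquiv (Fin 2)).surjective.exists,
    orthogonalGroupEquivLinearIsometryEquiv_toLp, (toLp_injective 2).eq_iff, Subtype.exists,
    exists_prop] using hgeneral
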